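/- arXiv:1802.01117 — 3 statements merged into one kernel-verified Lean document; each statement's English description precedes it below -/
import Mathlib

section
/- Suppose r_ij ≥ 0 and b_ij ≥ 0 for all i,j; suppose for every SC i the feasible set F_i = { j : b_ij ≤ B_j and SINR_ij ≥ SINR_min } is nonempty, that j(i) ∈ F_i maximizes r_ij over F_i, and set U_0 = Σ_i r_{i,j(i)}, L_j = { i : j(i) = j }, O_j = Σ_{i ∈ L_j} b_ij − B_j, and M′ = { j : O_j > 0 }. Suppose further that for every j ∈ M′ and every i ∈ L_j the set F_i \ {j(i)} is nonempty, and define q_i = r_{i,j(i)} − max{ r_ik : k ∈ F_i, k ≠ j(i) } for i in such L_j. For each j ∈ M′ let v_j be the minimum of Σ_{i ∈ L_j} q_i·y_i over binary vectors y ∈ {0,1}^{L_j} subject to Σ_{i ∈ L_j} b_ij·y_i ≥ O_j (the 0-1 knapsack (17)). Then every binary matrix A ∈ {0,1}^{N_SC×N_D} satisfying Σ_i b_ij·A_ij ≤ B_j for all j, (A_ij = 1 implies SINR_ij ≥ SINR_min), and Σ_j A_ij ≤ 1 for all i has objective Σ_{i,j} r_ij·A_ij ≤ U_1, where U_1 =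 U_0 − Σ_{j ∈ M′} v_j. -/
/-!
Put `y i = 1 - A i (jsel i)`, the indicator that cell `i` is not served by its preferred platform.
Two facts give the bound:

* on an overloaded platform `j`, the capacity constraint on `A` implies that `y` is feasible
  for the knapsack of `j`, so `v j` is at most the total penalty `q i * y i` over the cells
  preferring `j`;
* each row of `A` earns at most `r i (jsel i)`, and at most `r i (jsel i) - q i * y i` when the
  preferred platform of `i` is overloaded, because a cell that leaves its preferred platform gets
  at best its second-best feasible rate, or nothing.

Summing the row bounds over `i`, with the penalties grouped by preferred platform, yields the claim.
-/

open Finset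

/-- A binary row with sum at most one is zero or a standard basis vector. -/
lemma binary_row_cases {n : ℕ} (a : Fin n → ℝ) (h01 : ∀ j, a j = 0 ∨ a j = 1)
    (hs : ∑ j, a j ≤ 1) :
    (∀ j, a j = 0) ∨ ∃ k, a k = 1 ∧ ∀ j, j ≠ k → a j = 0 := by
  by_cases h : ∀ j, a j = 0
  · exact Or.inl h
  · push Not at h
    obtain ⟨k, hk⟩ := h
    have hk1 : a k = 1 := (h01 k).resolve_left hk
    refine Or.inr ⟨k, hk1, fun j hj => (h01 j).resolve_right fun hj1 => ?_⟩
    have hle : ∑ l ∈ ({j, k} : Finset (Fin n)), a l ≤ ∑ l, a l :=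
      Finset.sum_le_sum_of_subset_of_nonneg (Finset.subset_univ _) fun l _ _ => by
        rcases h01 l with h | h <;> simp [h]
    rw [Finset.sum_pair hj] at hle
    linarith

/-- The GAP-based bound U₁ = U₀ − Σ_{j ∈ M′} v_j (eq. (18)), where v_j is
the optimal value of the 0-1 knapsack (17), is an upper bound on the objective of every
matrix feasible for the relaxed association problem. -/
theorem U1_upper_bound_relaxed
    (nSC nD : ℕ)
    (r b : Fin nSC → Fin nD → ℝ) (B : Fin nD → ℝ)
    (SINR : Fin nSC → Fin nD → ℝ) (SINRmin : ℝ)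
    (hr : ∀ i j, 0 ≤ r i j) (hb : ∀ i j, 0 ≤ b i j)
    (jsel : Fin nSC → Fin nD)
    (hjF : ∀ i, b i (jsel i) ≤ B (jsel i) ∧ SINRmin ≤ SINR i (jsel i))
    (hjmax : ∀ i j, b i j ≤ B j → SINRmin ≤ SINR i j → r i j ≤ r i (jsel i))
    (U0 : ℝ) (hU0 : U0 = ∑ i, r i (jsel i))
    (O : Fin nD → ℝ)
    (hO : ∀ j, O j = ∑ i ∈ Finset.univ.filter (fun i => jsel i = j), b i j - B j)
    (q : Fin nSC → ℝ)
    (hq : ∀ i, 0 < O (jsel i) →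
      IsGreatest {v : ℝ | ∃ k, (b i k ≤ B k ∧ SINRmin ≤ SINR i k) ∧ k ≠ jsel i ∧ v = r i k}
        (r i (jsel i) - q i))
    (v : Fin nD → ℝ)
    (hv : ∀ j, 0 < O j →
      IsLeast {w : ℝ | ∃ y : Fin nSC → ℝ, (∀ i, y i = 0 ∨ y i = 1) ∧
          (O j ≤ ∑ i ∈ Finset.univ.filter (fun i => jsel i = j), b i j * y i) ∧
          w = ∑ i ∈ Finset.univ.filter (fun i => jsel i = j), q i * y i} (v j))
    (U1 : ℝ)
    (hU1 : U1 = U0 - ∑ j ∈ Finset.univ.filter (fun j => 0 < O j), v j) :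
    ∀ A : Fin nSC → Fin nD → ℝ,
      (∀ i j, A i j = 0 ∨ A i j = 1) →
      (∀ j, ∑ i, b i j * A i j ≤ B j) →
      (∀ i j, A i j = 1 → SINRmin ≤ SINR i j) →
      (∀ i, ∑ j, A i j ≤ 1) →
      ∑ i, ∑ j, r i j * A i j ≤ U1 := by
  intro A h01 hcap hsinr hrow
  have hAnn : ∀ i j, 0 ≤ A i j := fun i j => by
    rcases h01 i j with h | h <;> simp [h]
  -- A cell served by `k` fits alone into `k`, so `k` belongs to its feasible set.
  have hfit : ∀ i k, A i k = 1 → b i k ≤ B k := fun i k hik => by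
    have h := Finset.single_le_sum (f := fun i => b i k * A i k)
      (fun l _ => mul_nonneg (hb l k) (hAnn l k)) (Finset.mem_univ i)
    simp only [hik, mul_one] at h
    exact h.trans (hcap k)
  have hrowbd : ∀ i, ∑ j, r i j * A i j ≤
      r i (jsel i) - if 0 < O (jsel i) then q i * (1 - A i (jsel i)) else 0 := by
    intro i
    rcases binary_row_cases (A i) (h01 i) (hrow i) with h0 | ⟨k, hk1, hk0⟩
    · simp only [h0, mul_zero, Finset.sum_const_zero, sub_zero, mul_one]
      split_ifs with hOi
      · obtain ⟨k, -, -, hk⟩ := (hq i hOi).1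
        rw [hk]
        exact hr i k
      · simpa using hr i (jsel i)
    · have hsum : ∑ j, r i j * A i j = r i k := by
        rw [Finset.sum_eq_single k (fun j _ hj => by rw [hk0 j hj, mul_zero]) (by simp),
          hk1, mul_one]
      rw [hsum]
      by_cases hkj : k = jsel i
      · subst hkj
        simp [hk1]
      · rw [hk0 _ (Ne.symm hkj)]
        split_ifs with hOi
        · simpa using (hq i hOi).2 ⟨k, ⟨hfit i k hk1, hsinr i k hk1⟩, hkj, rfl⟩
        · simpa using hjmax i k (hfit i k hk1) (hsinr i k hk1)
  have hvle : ∀ j, 0 < O j →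
      v j ≤ ∑ i ∈ Finset.univ.filter (fun i => jsel i = j), q i * (1 - A i (jsel i)) := by
    intro j hj
    refine (hv j hj).2 ⟨fun i => 1 - A i (jsel i), fun i => ?_, ?_, rfl⟩
    · rcases h01 i (jsel i) with h | h <;> simp [h]
    · have hpart : ∑ i ∈ Finset.univ.filter (fun i => jsel i = j), b i j * A i j ≤ B j :=
        (Finset.sum_le_sum_of_subset_of_nonneg (Finset.subset_univ _)
          fun l _ _ => mul_nonneg (hb l j) (hAnn l j)).trans (hcap j)
      have heq : ∑ i ∈ Finset.univ.filter (fun i => jsel i = j), b i j * (1 - A i (jsel i)) =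
          ∑ i ∈ Finset.univ.filter (fun i => jsel i = j), b i j -
          ∑ i ∈ Finset.univ.filter (fun i => jsel i = j), b i j * A i j := by
        rw [← Finset.sum_sub_distrib]
        refine Finset.sum_congr rfl fun i hi => ?_
        rw [(Finset.mem_filter.1 hi).2]
        ring
      rw [heq, hO j]
      linarith
  have hvsum : ∑ j ∈ Finset.univ.filter (fun j => 0 < O j), v j ≤
      ∑ i, if 0 < O (jsel i) then q i * (1 - A i (jsel i)) else 0 := by
    rw [← Finset.sum_fiberwise Finset.univ jsel, Finset.sum_filter]
    refine Finset.sum_le_sum fun j _ => ?_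
    split_ifs with hj
    · refine (hvle j hj).trans_eq (Finset.sum_congr rfl fun i hi => ?_)
      rw [if_pos (by rwa [(Finset.mem_filter.1 hi).2])]
    · refine (Finset.sum_eq_zero fun i hi => ?_).ge
      rw [if_neg (by rwa [(Finset.mem_filter.1 hi).2])]
  have htot := Finset.sum_le_sum fun i (_ : i ∈ Finset.univ) => hrowbd i
  rw [Finset.sum_sub_distrib] at htot
  rw [hU1, hU0]
  linarith
end

section
/- Let f_c > 0, c > 0, γ > 0, h_D > 0, α > 0, β > 0, and η_NLoS ≥ η_LoS. Then the mean path loss function PL(s) = 10·γ·log₁₀(4π·f_c·√(h_D² + s²)/c) + P(LoS)(θ(s))·η_LoS + (1 − P(LoS)(θ(s)))·η_NLoS, where θ(s) = arctan(h_D/s) and P(LoS)(θ) = 1/(1 + α·exp(−β·((180/π)·θ − α))), is strictly increasing in the horizontal distance s on (0, ∞). -/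
/-!
The free-space term is strictly increasing in `s`, because the distance `√(h_D² + s²)` is and `γ > 0`.
The elevation angle `arctan (h_D / s)` decreases in `s`, so the line-of-sight probability `P`
decreases; as `P * η_LoS + (1 - P) * η_NLoS = η_NLoS - P * (η_NLoS - η_LoS)` with `η_LoS ≤ η_NLoS`,
the excess loss is nondecreasing.
-/

/-- The mean path loss
PL(s) = 10γ·log₁₀(4π f_c √(h_D² + s²)/c) + P(LoS)(θ(s))·η_LoS + (1 − P(LoS)(θ(s)))·η_NLoS
is strictly increasing in the horizontal distance s on (0, ∞). -/
theorem path_loss_strictMonoOn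
    (fc c γ hD α β ηLoS ηNLoS : ℝ)
    (hfc : 0 < fc) (hc : 0 < c) (hγ : 0 < γ) (hh : 0 < hD)
    (hα : 0 < α) (hβ : 0 < β) (hη : ηLoS ≤ ηNLoS) :
    StrictMonoOn (fun s : ℝ =>
        10 * γ * Real.logb 10 (4 * Real.pi * fc * Real.sqrt (hD ^ 2 + s ^ 2) / c) +
        (1 / (1 + α * Real.exp (-β * ((180 / Real.pi) * Real.arctan (hD / s) - α)))) * ηLoS +
        (1 - 1 / (1 + α * Real.exp (-β * ((180 / Real.pi) * Real.arctan (hD / s) - α)))) * ηNLoS)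
      (Set.Ioi 0) := by
  intro s hs t ht hst
  have hs0 : 0 < s := hs
  have ht0 : 0 < t := ht
  have hpi := Real.pi_pos
  have hlog : Real.logb 10 (4 * Real.pi * fc * Real.sqrt (hD ^ 2 + s ^ 2) / c) <
      Real.logb 10 (4 * Real.pi * fc * Real.sqrt (hD ^ 2 + t ^ 2) / c) := by
    apply Real.logb_lt_logb (by norm_num) (by positivity)
    gcongr
  have hfree := mul_lt_mul_of_pos_left hlog (show 0 < 10 * γ by positivity)
  have hangle : Real.arctan (hD / t) ≤ Real.arctan (hD / s) :=
    Real.arctan_mono (by gcongr)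
  have hexp : -β * ((180 / Real.pi) * Real.arctan (hD / s) - α) ≤
      -β * ((180 / Real.pi) * Real.arctan (hD / t) - α) := by
    rw [neg_mul, neg_mul, neg_le_neg_iff]
    gcongr
  have hP : 1 / (1 + α * Real.exp (-β * ((180 / Real.pi) * Real.arctan (hD / t) - α))) ≤
      1 / (1 + α * Real.exp (-β * ((180 / Real.pi) * Real.arctan (hD / s) - α))) := by
    apply one_div_le_one_div_of_le (by positivity)
    gcongr
  have hexcess := mul_le_mul_of_nonneg_right hP (sub_nonneg.mpr hη)
  beta_reduce
  linarith
end

section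
/- Let f_c > 0, c > 0, γ > 0, h_D > 0, α > 0, β > 0, and η_NLoS ≥ η_LoS, and let PL(s) denote the mean path loss PL(s) = 10·γ·log₁₀(4π·f_c·√(h_D² + s²)/c) + P(LoS)(θ(s))·η_LoS + (1 − P(LoS)(θ(s)))·η_NLoS with θ(s) = arctan(h_D/s) and P(LoS)(θ) = 1/(1 + α·exp(−β·((180/π)·θ − α))). Then PL is continuous on (0, ∞) and tends to +∞ as s → ∞, and for every threshold PL_max exceeding the infimum of PL on (0, ∞) there exists exactly one s* ∈ (0, ∞) with PL(s*) = PL_max; for all s ≤ s* one has PL(s) ≤ PL_max and for all s > s* one has PL(s) > PL_max. Hence fixing a maximum path loss determines a unique coverage radius of an NFP at a fixed altitude. -/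
/-!
The path loss is the sum of a distance term, which is continuous, strictly increasing and
unbounded in `s`, and a convex combination of `ηLoS ≤ ηNLoS`. As `s` grows the elevation angle
`arctan (hD / s)` decreases, so the weight of `ηLoS` decreases and the combination is
nondecreasing; it is also bounded below by `ηLoS`. Hence `PL` is continuous, strictly increasing
and tends to `+∞` on `(0, ∞)`, and the intermediate value theorem yields the crossing point,
which strict monotonicity makes unique.
-/

/-- The abstract crossing argument. The infimum hypothesis supplies only a point where `f` lies
below the threshold; boundedness below of `f` is not needed for that. -/
lemma existsUnique_crossing {f : ℝ → ℝ} (hcont : ContinuousOn f (Set.Ioi 0))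
    (hmono : StrictMonoOn f (Set.Ioi 0)) (htop : Filter.Tendsto f Filter.atTop Filter.atTop)
    {M : ℝ} (hM : sInf (f '' Set.Ioi 0) < M) :
    ∃ t ∈ Set.Ioi (0 : ℝ), f t = M ∧
      (∀ s ∈ Set.Ioi (0 : ℝ), f s = M → s = t) ∧
      (∀ s ∈ Set.Ioi (0 : ℝ), s ≤ t → f s ≤ M) ∧
      (∀ s ∈ Set.Ioi (0 : ℝ), t < s → M < f s) := by
  obtain ⟨_, ⟨a, ha, rfl⟩, haM⟩ :=
    exists_lt_of_csInf_lt (Set.Nonempty.image f ⟨1, Set.mem_Ioi.2 one_pos⟩) hM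
  obtain ⟨b, hbM, hab⟩ :=
    ((htop.eventually_ge_atTop M).and (Filter.eventually_ge_atTop a)).exists
  have hsub : Set.Icc a b ⊆ Set.Ioi 0 := fun x hx => lt_of_lt_of_le ha hx.1
  obtain ⟨t, ht, rfl⟩ := intermediate_value_Icc hab (hcont.mono hsub) ⟨haM.le, hbM⟩
  exact ⟨t, hsub ht, rfl, fun s hs h => hmono.injOn hs (hsub ht) h,
    fun s hs h => hmono.monotoneOn hs (hsub ht) h, fun s hs h => hmono (hsub ht) hs h⟩

/-- The mean path loss PL is continuous on (0,∞), tends to +∞ as s → ∞,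
and for every threshold PL_max above the infimum of PL on (0,∞) there is a unique
s* ∈ (0,∞) with PL(s*) = PL_max; PL(s) ≤ PL_max for s ≤ s* and PL(s) > PL_max for
s > s*: a maximum path loss determines a unique coverage radius. -/
theorem path_loss_unique_coverage_radius
    (fc c γ hD α β ηLoS ηNLoS : ℝ)
    (hfc : 0 < fc) (hc : 0 < c) (hγ : 0 < γ) (hh : 0 < hD)
    (hα : 0 < α) (hβ : 0 < β) (hη : ηLoS ≤ ηNLoS)
    (PL : ℝ → ℝ)
    (hPL : ∀ s, PL s =
      10 * γ * Real.logb 10 (4 * Real.pi * fc * Real.sqrt (hD ^ 2 + s ^ 2) / c) +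
      (1 / (1 + α * Real.exp (-β * ((180 / Real.pi) * Real.arctan (hD / s) - α)))) * ηLoS +
      (1 - 1 / (1 + α * Real.exp (-β * ((180 / Real.pi) * Real.arctan (hD / s) - α)))) * ηNLoS) :
    ContinuousOn PL (Set.Ioi 0) ∧
    Filter.Tendsto PL Filter.atTop Filter.atTop ∧
    ∀ PLmax : ℝ, sInf (PL '' Set.Ioi 0) < PLmax →
      ∃ sstar ∈ Set.Ioi (0 : ℝ), PL sstar = PLmax ∧
        (∀ s ∈ Set.Ioi (0 : ℝ), PL s = PLmax → s = sstar) ∧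
        (∀ s ∈ Set.Ioi (0 : ℝ), s ≤ sstar → PL s ≤ PLmax) ∧
        (∀ s ∈ Set.Ioi (0 : ℝ), sstar < s → PLmax < PL s) := by
  have hπ := Real.pi_pos
  have hden : ∀ x : ℝ, 0 < α * Real.exp x := fun x => mul_pos hα (Real.exp_pos x)
  have hcont : ContinuousOn PL (Set.Ioi 0) := by
    rw [show PL = _ from funext hPL]
    intro s hs
    have hs0 : s ≠ 0 := ne_of_gt hs
    have harg : 4 * Real.pi * fc * Real.sqrt (hD ^ 2 + s ^ 2) / c ≠ 0 := by positivity
    have hP : ContinuousAt (fun s : ℝ =>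
        1 / (1 + α * Real.exp (-β * ((180 / Real.pi) * Real.arctan (hD / s) - α)))) s := by
      have h1 : ContinuousAt (fun s : ℝ => Real.arctan (hD / s)) s :=
        Real.continuous_arctan.continuousAt.comp (continuousAt_const.div continuousAt_id hs0)
      refine ContinuousAt.div continuousAt_const ?_ (by positivity)
      fun_prop
    have hL : ContinuousAt (fun s : ℝ =>
        Real.logb 10 (4 * Real.pi * fc * Real.sqrt (hD ^ 2 + s ^ 2) / c)) s := by
      unfold Real.logb
      have hin : ContinuousAt (fun s : ℝ =>
          4 * Real.pi * fc * Real.sqrt (hD ^ 2 + s ^ 2) / c) s := by fun_prop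
      exact (hin.log harg).div_const _
    exact (((continuousAt_const.mul hL).add (hP.mul continuousAt_const)).add
      ((continuousAt_const.sub hP).mul continuousAt_const)).continuousWithinAt
  have hmono : StrictMonoOn PL (Set.Ioi 0) := by
    intro s hs t ht hst
    simp only [Set.mem_Ioi] at hs ht
    have hL : Real.logb 10 (4 * Real.pi * fc * Real.sqrt (hD ^ 2 + s ^ 2) / c) <
        Real.logb 10 (4 * Real.pi * fc * Real.sqrt (hD ^ 2 + t ^ 2) / c) := by
      apply Real.logb_lt_logb (by norm_num) (by positivity)
      gcongr
    have hθ : Real.arctan (hD / t) ≤ Real.arctan (hD / s) :=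
      Real.arctan_strictMono.monotone (by gcongr)
    have hP : 1 / (1 + α * Real.exp (-β * ((180 / Real.pi) * Real.arctan (hD / t) - α))) ≤
        1 / (1 + α * Real.exp (-β * ((180 / Real.pi) * Real.arctan (hD / s) - α))) := by
      apply one_div_le_one_div_of_le (by positivity)
      have hang : (180 / Real.pi) * Real.arctan (hD / t) ≤
          (180 / Real.pi) * Real.arctan (hD / s) := by gcongr
      have hexp : -β * ((180 / Real.pi) * Real.arctan (hD / s) - α) ≤
          -β * ((180 / Real.pi) * Real.arctan (hD / t) - α) := by nlinarith
      gcongr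
    rw [hPL s, hPL t]
    have h1 := mul_lt_mul_of_pos_left hL (show 0 < 10 * γ by positivity)
    have h2 := mul_le_mul_of_nonneg_right hP (sub_nonneg.2 hη)
    linarith
  have htop : Filter.Tendsto PL Filter.atTop Filter.atTop := by
    have hlog : Filter.Tendsto (fun s : ℝ =>
        10 * γ * Real.logb 10 (4 * Real.pi * fc / c * s) + ηLoS) Filter.atTop Filter.atTop := by
      apply Filter.tendsto_atTop_add_const_right
      apply Filter.Tendsto.const_mul_atTop (by positivity)
      exact (Real.tendsto_logb_atTop (by norm_num)).comp
        (Filter.tendsto_id.const_mul_atTop (by positivity))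
    refine Filter.tendsto_atTop_mono' _ ?_ hlog
    filter_upwards [Filter.eventually_gt_atTop 0] with s hs
    have hL : Real.logb 10 (4 * Real.pi * fc / c * s) ≤
        Real.logb 10 (4 * Real.pi * fc * Real.sqrt (hD ^ 2 + s ^ 2) / c) := by
      apply Real.logb_le_logb_of_le (by norm_num) (by positivity)
      rw [div_mul_eq_mul_div]
      have : s ≤ Real.sqrt (hD ^ 2 + s ^ 2) := Real.le_sqrt_of_sq_le (by nlinarith)
      gcongr
    have hP : 1 / (1 + α * Real.exp (-β * ((180 / Real.pi) * Real.arctan (hD / s) - α))) ≤ 1 :=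
      (div_le_one (by positivity)).2 (le_add_of_nonneg_right (hden _).le)
    rw [hPL s]
    have h1 := mul_le_mul_of_nonneg_left hL (show 0 ≤ 10 * γ by positivity)
    have h2 := mul_le_mul_of_nonneg_right hP (sub_nonneg.2 hη)
    linarith
  exact ⟨hcont, htop, fun _ hM => existsUnique_crossing hcont hmono htop hM⟩
end
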